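/- A periodic matrix A (over ℚ, an algebraically closed field, or a field of prime characteristic) is the sum of a torsion matrix and a square-zero matrix if and only if rank(A) ≥ n/2. -/

import Mathlib

/-!
Let `f` be the endomorphism with range `E` and kernel `Z`. If `f = T + N` with `T` invertible and
`N ^ 2 = 0`, then `ker f` meets `ker N ⊇ range N` trivially, which bounds `dim Z` by `dim E`.

Conversely, `f` restricted to `E` is bordered by `Z` to an endomorphism of `E × Z` of finite order
whose `Z`-block is zero. Transported to the whole space along a suitable `x ↦ (f x, ψ x)`, it
differs from `f` by a map which vanishes when the `Z`-coordinate does, and whose values have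
`Z`-coordinate zero; such a map squares to zero. The bordering is built on the primary cyclic blocks
`F[X] / (q)`, each being completed inside `F[X] / (Q)` for a divisor `Q` of some `X ^ s - 1` of
larger degree. Because of the zero block, the companion matrices of `q` and `Q` need equal traces.
A `Q` of given degree and trace exists if that trace is zero or a root of unity, and over the fields
in question the primary `q` have such traces, by reduction to cyclotomic polynomials, to linear
polynomials or to finite fields.
-/

open Polynomial

section Bordering

variable {R E E' V Z Z' : Type*} [CommRing R]
  [AddCommGroup E] [Module R E] [AddCommGroup E'] [Module R E'] [AddCommGroup V] [Module R V]
  [AddCommGroup Z] [Module R Z] [AddCommGroup Z'] [Module R Z']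

/-- The block matrix `[C, *; *, 0]` on `E × Z` can be completed to an endomorphism of finite
order. -/
def HasTorsionBordering (C : Module.End R E) (Z : Type*) [AddCommGroup Z] [Module R Z] : Prop :=
  ∃ T : Module.End R (E × Z),
    IsOfFinOrder T ∧ (∀ x, (T (x, 0)).1 = C x) ∧ ∀ z, (T (0, z)).2 = 0

namespace HasTorsionBordering

theorem of_linearEquiv {C : Module.End R E} {T : Module.End R V} (hT : IsOfFinOrder T)
    (Θ : (E × Z) ≃ₗ[R] V) (hE : ∀ x, ∃ z, T (Θ (x, 0)) = Θ (C x, z))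
    (hZ : ∀ z, ∃ x, T (Θ (0, z)) = Θ (x, 0)) : HasTorsionBordering C Z := by
  refine ⟨Θ.symm.conjAlgEquiv R T, (Θ.symm.conjAlgEquiv R).toMonoidHom.isOfFinOrder hT,
    fun x ↦ ?_, fun z ↦ ?_⟩
  · obtain ⟨z, hz⟩ := hE x
    simp [LinearEquiv.conjAlgEquiv_apply, hz]
  · obtain ⟨x, hx⟩ := hZ z
    simp [LinearEquiv.conjAlgEquiv_apply, hx]

theorem congr {C : Module.End R E} {C' : Module.End R E'} (h : HasTorsionBordering C Z)
    (e : E ≃ₗ[R] E') (he : ∀ x, e (C x) = C' (e x)) (f : Z ≃ₗ[R] Z') :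
    HasTorsionBordering C' Z' := by
  obtain ⟨T, hT, hTE, hTZ⟩ := h
  refine of_linearEquiv hT (e.prodCongr f).symm (fun x ↦ ⟨f (T (e.symm x, 0)).2, ?_⟩)
    (fun z ↦ ⟨e (T (0, f.symm z)).1, ?_⟩)
  · have : C (e.symm x) = e.symm (C' x) := by rw [LinearEquiv.eq_symm_apply, he, e.apply_symm_apply]
    ext <;> simp [hTE, this]
  · ext <;> simp [hTZ]

theorem pi {ι : Type*} [Finite ι] {E Z : ι → Type*} [∀ i, AddCommGroup (E i)]
    [∀ i, Module R (E i)] [∀ i, AddCommGroup (Z i)] [∀ i, Module R (Z i)]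
    {C : ∀ i, Module.End R (E i)} (h : ∀ i, HasTorsionBordering (C i) (Z i)) :
    HasTorsionBordering (LinearMap.piMap C) (∀ i, Z i) := by
  choose T hT hTE hTZ using h
  let Θ : ((∀ i, E i) × ∀ i, Z i) ≃ₗ[R] ∀ i, E i × Z i :=
    { toFun := fun x i ↦ (x.1 i, x.2 i)
      invFun := fun x ↦ (fun i ↦ (x i).1, fun i ↦ (x i).2)
      map_add' := fun _ _ ↦ rfl
      map_smul' := fun _ _ ↦ rfl }
  let piMapHom : (∀ i, Module.End R (E i × Z i)) →* Module.End R (∀ i, E i × Z i) :=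
    { toFun := LinearMap.piMap
      map_one' := rfl
      map_mul' := fun _ _ ↦ rfl }
  have hT' : IsOfFinOrder (LinearMap.piMap T) := piMapHom.isOfFinOrder (IsOfFinOrder.pi hT)
  refine of_linearEquiv hT' Θ (fun x ↦ ⟨fun i ↦ (T i (x i, 0)).2, ?_⟩)
    (fun z ↦ ⟨fun i ↦ (T i (0, z i)).1, ?_⟩)
  · ext i <;> simp [Θ, hTE]
  · ext i <;> simp [Θ, hTZ]

theorem of_isOfFinOrder [Subsingleton Z] {C : Module.End R E} (hC : IsOfFinOrder C) :
    HasTorsionBordering C Z :=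
  ⟨LinearMap.prodMapAlgHom R E Z (C, 1),
    (LinearMap.prodMapAlgHom R E Z).toMonoidHom.isOfFinOrder (hC.prod_mk .one),
    fun _ ↦ rfl, fun _ ↦ Subsingleton.elim _ _⟩

theorem self {C : Module.End R E} (hC : IsOfFinOrder C) : HasTorsionBordering C E := by
  -- `T ^ 2 = C * T - C ^ 2`, which gives `T ^ 3 = -C ^ 3`.
  let T : Module.End R (E × E) := (C.coprod (-C ^ 2)).prod (LinearMap.fst R E E)
  let D : Module.End R (E × E) := LinearMap.prodMapAlgHom R E E (C, C)
  have hD : IsOfFinOrder D :=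
    (LinearMap.prodMapAlgHom R E E).toMonoidHom.isOfFinOrder (hC.prod_mk hC)
  have hT3 : T ^ 3 = -D ^ 3 := by
    ext <;> simp [T, D, pow_succ]
  have hT : IsOfFinOrder T := by
    refine .of_pow (n := 3 * 2) ?_ (by decide)
    rw [pow_mul, hT3, neg_sq (D ^ 3)]
    exact hD.pow.pow
  exact ⟨T, hT, fun x ↦ by simp [T], fun z ↦ by simp [T]⟩

theorem of_add {A D : Module.End R E} {s : ℕ} (hs : 0 < s) (hA : A ^ s = 1) (hD : D ^ s = -1) :
    HasTorsionBordering (A + D) E := by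
  let T : Module.End R (E × E) :=
    (A ∘ₗ LinearMap.fst R E E).prod (LinearMap.coprod LinearMap.id D)
  have hTpow : ∀ i, ∃ S : Module.End R E, ∀ x y, (T ^ i) (x, y) = ((A ^ i) x, S x + (D ^ i) y) := by
    intro i
    induction i with
    | zero => exact ⟨0, fun x y ↦ by simp⟩
    | succ i ih =>
      obtain ⟨S, hS⟩ := ih
      exact ⟨A ^ i + D * S, fun x y ↦ by simp [pow_succ', hS, T, add_assoc]⟩
  have hT : IsOfFinOrder T := by
    obtain ⟨S, hS⟩ := hTpow s
    refine isOfFinOrder_iff_pow_eq_one.2 ⟨s + s, by omega, LinearMap.ext fun ⟨x, y⟩ ↦ ?_⟩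
    simp [pow_add, hS, hA, hD]
  -- In these coordinates `T` becomes `[A + D, 1; -A * D, 0]`.
  let Θ : (E × E) ≃ₗ[R] E × E :=
    { toFun := fun x ↦ (A x.1 + x.2, x.1)
      invFun := fun x ↦ (x.2, x.1 - A x.2)
      map_add' := fun x y ↦ by ext <;> simp [add_add_add_comm]
      map_smul' := fun c x ↦ by ext <;> simp
      left_inv := fun x ↦ by simp
      right_inv := fun x ↦ by simp }
  refine of_linearEquiv hT Θ (fun x ↦ ⟨A (A x) - A ((A + D) x), ?_⟩) (fun z ↦ ⟨z, ?_⟩)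
  · simp [T, Θ]
  · simp [T, Θ]

end HasTorsionBordering

end Bordering

section Nilpotent

variable {R E : Type*} [CommRing R] [AddCommGroup E] [Module R E]

theorem HasTorsionBordering.of_isNilpotent_of_charP (p : ℕ) [Fact p.Prime] [CharP R p]
    {C : Module.End R E} (hC : IsNilpotent C) : HasTorsionBordering C E := by
  obtain ⟨n, hn⟩ := hC
  have hfrob : (C - 1) ^ p ^ n = -1 := by
    have h := congrArg (aeval C) (sub_pow_char_pow (X : R[X]) 1 (p := p) (n := n))
    simpa [pow_eq_zero_of_le (Nat.lt_pow_self (Fact.out : p.Prime).one_lt).le hn] using h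
  simpa using of_add (pow_pos (Fact.out : p.Prime).pos n) (one_pow _) hfrob

theorem pow_eq_smul_one_of_span_eq_top {a : Module.End R E} {v : E}
    (hv : Submodule.span R (Set.range fun i : ℕ ↦ (a ^ i) v) = ⊤) {r : ℕ} {c : R}
    (h : (a ^ r) v = c • v) : a ^ r = c • 1 := by
  refine LinearMap.ext_on_range hv fun i ↦ ?_
  rw [← Module.End.mul_apply, ← pow_add, add_comm, pow_add, Module.End.mul_apply, h]
  simp

theorem add_smulRight_coord_last_pow {r : ℕ} (b : Module.Basis (Fin (r + 1)) R E)
    {C : Module.End R E} {v : E} (hb : ∀ i, b i = (C ^ (i : ℕ)) v) (hC : C ^ (r + 1) = 0) (c : R) :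
    (C + c • (b.coord (Fin.last r)).smulRight v) ^ (r + 1) = c • 1 := by
  set B : Module.End R E := C + c • (b.coord (Fin.last r)).smulRight v
  have hBpow : ∀ i ≤ r, (B ^ i) v = (C ^ i) v := by
    intro i hi
    induction i with
    | zero => rfl
    | succ i ih =>
      have hlast : b.coord (Fin.last r) ((C ^ i) v) = 0 := by
        rw [← hb ⟨i, by omega⟩, b.coord_apply, b.repr_self, Finsupp.single_eq_of_ne]
        simp [Fin.ext_iff]; omega
      rw [pow_succ', Module.End.mul_apply, ih (by omega), pow_succ', Module.End.mul_apply]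
      simp [B, hlast]
  refine pow_eq_smul_one_of_span_eq_top (eq_top_iff.2 ?_) (v := v) ?_
  · rw [← b.span_eq, Submodule.span_le]
    rintro _ ⟨i, rfl⟩
    rw [hb, ← hBpow i (by omega)]
    exact Submodule.subset_span ⟨i, rfl⟩
  · have hCr : C ((C ^ r) v) = 0 := by
      rw [← Module.End.mul_apply, ← pow_succ', hC, LinearMap.zero_apply]
    have hlast : b.coord (Fin.last r) ((C ^ r) v) = 1 := by
      have h := b.repr_self (Fin.last r)
      rw [hb, Fin.val_last] at h
      rw [b.coord_apply, h, Finsupp.single_eq_same]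
    rw [pow_succ', Module.End.mul_apply, hBpow r le_rfl]
    simp [B, hCr, hlast]

theorem HasTorsionBordering.of_pow_eq_zero [Invertible (2 : R)] {r : ℕ}
    (b : Module.Basis (Fin (r + 1)) R E) {C : Module.End R E} {v : E}
    (hb : ∀ i, b i = (C ^ (i : ℕ)) v) (hC : C ^ (r + 1) = 0) : HasTorsionBordering C E := by
  -- `C` is half the sum of the companion matrices of `X ^ (r + 1) ∓ 2 ^ (r + 1)`.
  let B (c : R) : Module.End R E := C + c • (b.coord (Fin.last r)).smulRight v
  have hB (c : R) : B c ^ (r + 1) = c • 1 := add_smulRight_coord_last_pow b hb hC c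
  have hA : ((⅟2 : R) • B (2 ^ (r + 1))) ^ (r + 1) = 1 := by
    rw [_root_.smul_pow, hB, smul_smul, ← mul_pow, invOf_mul_self, one_pow, one_smul]
  have hD : ((⅟2 : R) • B (-2 ^ (r + 1))) ^ (r + 1) = -1 := by
    rw [_root_.smul_pow, hB, smul_smul, mul_neg, ← mul_pow, invOf_mul_self, one_pow,
      neg_smul, one_smul]
  have hC : C = (⅟2 : R) • B (2 ^ (r + 1)) + (⅟2 : R) • B (-2 ^ (r + 1)) := by
    rw [← smul_add, add_add_add_comm, neg_smul, add_neg_cancel, add_zero, smul_add,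
      invOf_two_smul_add_invOf_two_smul]
  rw [hC]
  exact of_add r.succ_pos hA hD

end Nilpotent

section TorsionPolynomial

variable {R : Type*} [CommRing R] [Nontrivial R]

theorem exists_monic_dvd_X_pow_sub_one_of_isOfFinOrder {c : R} (hc : IsOfFinOrder c) {m : ℕ}
    (hm : m ≠ 0) : ∃ Q : R[X], Q.Monic ∧ Q.natDegree = m ∧ Q.nextCoeff = c ∧
      ∃ s, 0 < s ∧ Q ∣ X ^ s - 1 := by
  obtain ⟨s, hs, hcs⟩ := isOfFinOrder_iff_pow_eq_one.1 hc
  let Q : R[X] := ∑ i ∈ Finset.range (m + 1), X ^ i * C c ^ (m - i)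
  have hcoeff (j : ℕ) : Q.coeff j = if j ≤ m then c ^ (m - j) else 0 := by
    simp only [Q, finsetSum_coeff, ← C_pow, coeff_mul_C, coeff_X_pow, ite_mul, one_mul, zero_mul,
      Finset.sum_ite_eq, Finset.mem_range, Nat.lt_succ_iff]
  have hdeg : Q.natDegree ≤ m := natDegree_le_iff_coeff_eq_zero.2 fun j hj ↦ by
    simp [hcoeff, hj.not_ge]
  have hmonic : Q.Monic := monic_of_natDegree_le_of_coeff_eq_one m hdeg (by simp [hcoeff])
  have hnat : Q.natDegree = m := natDegree_eq_of_le_of_coeff_ne_zero hdeg (by simp [hcoeff])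
  refine ⟨Q, hmonic, hnat, ?_, (m + 1) * s, by positivity, ?_⟩
  · rw [nextCoeff_of_natDegree_pos (by omega), hnat, hcoeff, if_pos (by omega),
      show m - (m - 1) = 1 by omega, pow_one]
  · calc
      Q ∣ X ^ (m + 1) - C c ^ (m + 1) :=
        ⟨X - C c, (Commute.all X (C c)).geom_sum₂_mul (m + 1) |>.symm⟩
      _ ∣ (X ^ (m + 1)) ^ s - (C c ^ (m + 1)) ^ s := sub_dvd_pow_sub_pow _ _ s
      _ = X ^ ((m + 1) * s) - 1 := by
        rw [← pow_mul, pow_right_comm, ← C_pow, hcs, C_1, one_pow]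

theorem exists_monic_dvd_X_pow_sub_one {c : R} (hc : c = 0 ∨ IsOfFinOrder c) {m : ℕ}
    (hm : 2 ≤ m) : ∃ Q : R[X], Q.Monic ∧ Q.natDegree = m ∧ Q.nextCoeff = c ∧
      ∃ s, 0 < s ∧ Q ∣ X ^ s - 1 := by
  obtain rfl | hc := hc
  · have hnat : (X ^ m - C 1 : R[X]).natDegree = m := natDegree_X_pow_sub_C
    refine ⟨X ^ m - C 1, monic_X_pow_sub_C 1 (by omega), hnat, ?_, m, by omega, by simp⟩
    rw [nextCoeff_of_natDegree_pos (by omega), hnat, coeff_sub, coeff_X_pow, coeff_C,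
      if_neg (by omega), if_neg (by omega), sub_zero]
  · exact exists_monic_dvd_X_pow_sub_one_of_isOfFinOrder hc (by omega)

end TorsionPolynomial

section BinaryForms

variable {R : Type*} [CommRing R]

/-- The forms of degree `z - 1` in `X` and `X ^ 2 + 1` (none for `z = 0`). Together with their
multiples by `X` they make up all polynomials of degree less than `2 * z`. -/
noncomputable def binaryForms (R : Type*) [CommRing R] (z : ℕ) : Submodule R R[X] :=
  Submodule.span R (Set.range fun i : Fin z ↦ X ^ (i : ℕ) * (X ^ 2 + 1) ^ (i.rev : ℕ))

theorem X_pow_mul_mem_binaryForms {z i k : ℕ} (h : i + k + 1 = z) :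
    (X ^ i * (X ^ 2 + 1) ^ k : R[X]) ∈ binaryForms R z := by
  refine Submodule.subset_span ⟨⟨i, by omega⟩, ?_⟩
  simp only [Fin.val_rev, show z - (i + 1) = k by omega]

theorem binaryForms_le_iff {z : ℕ} {S : Submodule R R[X]} :
    binaryForms R z ≤ S ↔ ∀ i k, i + k + 1 = z → X ^ i * (X ^ 2 + 1) ^ k ∈ S := by
  refine ⟨fun h i k hik ↦ h (X_pow_mul_mem_binaryForms hik), fun h ↦ Submodule.span_le.2 ?_⟩
  rintro _ ⟨i, rfl⟩
  exact h _ _ (by rw [Fin.val_rev]; omega)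

theorem X_mul_mem_binaryForms {z : ℕ} {p : R[X]} (hp : p ∈ binaryForms R z) :
    X * p ∈ binaryForms R (z + 1) := by
  suffices binaryForms R z ≤ (binaryForms R (z + 1)).comap (LinearMap.mulLeft R X) from this hp
  refine binaryForms_le_iff.2 fun i k hik ↦ ?_
  rw [Submodule.mem_comap, LinearMap.mulLeft_apply, ← mul_assoc, ← pow_succ']
  exact X_pow_mul_mem_binaryForms (by omega)

theorem monic_X_sq_add_one_pow (k : ℕ) : ((X ^ 2 + 1 : R[X]) ^ k).Monic :=
  (monic_X_pow_add_C 1 two_ne_zero).pow k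

theorem natDegree_X_sq_add_one_pow [Nontrivial R] (k : ℕ) :
    ((X ^ 2 + 1 : R[X]) ^ k).natDegree = 2 * k := by
  have hmonic : (X ^ 2 + 1 : R[X]).Monic := monic_X_pow_add_C 1 two_ne_zero
  have hdeg : (X ^ 2 + 1 : R[X]).natDegree = 2 := natDegree_X_pow_add_C
  rw [hmonic.natDegree_pow, hdeg, mul_comm]

theorem exists_eq_add_X_mul_of_degree_lt [Nontrivial R] {z : ℕ} {p : R[X]}
    (hp : p.degree < (2 * z : ℕ)) :
    ∃ a ∈ binaryForms R z, ∃ b ∈ binaryForms R z, p = a + X * b := by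
  induction z generalizing p with
  | zero => exact ⟨0, zero_mem _, 0, zero_mem _, by simpa [degree_eq_bot] using hp⟩
  | succ z ih =>
    rw [degree_lt_iff_coeff_zero] at hp
    let u : R[X] := (X ^ 2 + 1) ^ z
    have hu_mem : u ∈ binaryForms R (z + 1) := by
      simpa using X_pow_mul_mem_binaryForms (R := R) (i := 0) rfl
    have hu_coeff : ∀ m, 2 * z < m → u.coeff m = 0 := fun m hm ↦
      coeff_eq_zero_of_natDegree_lt (by rwa [natDegree_X_sq_add_one_pow])
    have hu_lead : u.coeff (2 * z) = 1 := by
      rw [← natDegree_X_sq_add_one_pow (R := R) z]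
      exact (monic_X_sq_add_one_pow z).coeff_natDegree
    let v := p.coeff 0 • u + p.coeff (2 * z + 1) • (X * u)
    have hdeg : (divX (p - v)).degree < (2 * z : ℕ) := by
      refine (degree_lt_iff_coeff_zero _ _).2 fun m hm ↦ ?_
      obtain rfl | hm := hm.eq_or_lt
      · simp [v, coeff_divX, coeff_X_mul, hu_lead, hu_coeff]
      · simp [v, coeff_divX, coeff_X_mul, hu_coeff m hm, hu_coeff (m + 1) (by omega),
          hp (m + 1) (by omega)]
    obtain ⟨a, ha, b, hb, hab⟩ := ih hdeg
    have hv : (p - v).coeff 0 = 0 := by simp [v, u, coeff_zero_eq_eval_zero]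
    have hp_eq : p = X * divX (p - v) + v := by
      have h := X_mul_divX_add (p - v)
      rw [hv, C_0, add_zero] at h
      rw [h, sub_add_cancel]
    refine ⟨X * a + p.coeff 0 • u,
      add_mem (X_mul_mem_binaryForms ha) (Submodule.smul_mem _ _ hu_mem),
      X * b + p.coeff (2 * z + 1) • u,
      add_mem (X_mul_mem_binaryForms hb) (Submodule.smul_mem _ _ hu_mem), ?_⟩
    calc p = X * divX (p - v) + v := hp_eq
      _ = X * a + p.coeff 0 • u + X * (X * b + p.coeff (2 * z + 1) • u) := by
        rw [hab]
        simp only [v, smul_eq_C_mul]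
        ring

end BinaryForms

section XLinearModulo

variable {R : Type*} [CommRing R]

/-- Linear maps of `R[X]` that commute with multiplication by `X` up to an error in `Z`. If in
addition `Φ q = Q`, then `Φ` induces a linear map from `R[X] / (q)` to `R[X] / (Q)` with the same
property. -/
def IsXLinearMod (Z : Submodule R R[X]) (Φ : R[X] →ₗ[R] R[X]) : Prop :=
  ∀ p, Φ (X * p) - X * Φ p ∈ Z

/-- The linear map sending `1` to `y` and `X * p` to `Φ p`. -/
noncomputable def consMap (y : R[X]) (Φ : R[X] →ₗ[R] R[X]) : R[X] →ₗ[R] R[X] where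
  toFun p := p.coeff 0 • y + Φ (divX p)
  map_add' p q := by simp only [coeff_add, divX_add, map_add]; module
  map_smul' c p := by
    have h : divX (c • p) = c • divX p := by simp only [smul_eq_C_mul, divX_C_mul]
    rw [h, coeff_smul, map_smul, smul_assoc, ← smul_add, RingHom.id_apply]

theorem consMap_apply (y : R[X]) (Φ : R[X] →ₗ[R] R[X]) (p : R[X]) :
    consMap y Φ p = p.coeff 0 • y + Φ (divX p) :=
  rfl

@[simp]
theorem consMap_one (y : R[X]) (Φ : R[X] →ₗ[R] R[X]) : consMap y Φ 1 = y := by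
  simp [consMap_apply]

@[simp]
theorem consMap_X_mul (y : R[X]) (Φ : R[X] →ₗ[R] R[X]) (p : R[X]) :
    consMap y Φ (X * p) = Φ p := by
  have h : divX (X * p) = p := by ext; simp [coeff_divX]
  simp [consMap_apply, h]

variable {Z : Submodule R R[X]} {Φ : R[X] →ₗ[R] R[X]}

theorem isXLinearMod_mulRight (Z : Submodule R R[X]) (y : R[X]) :
    IsXLinearMod Z (LinearMap.mulRight R y) := fun p ↦ by
  simp [mul_assoc]

theorem IsXLinearMod.cons {y t : R[X]} (hΦ : IsXLinearMod Z Φ) (ht : t ∈ Z)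
    (h1 : Φ 1 = X * y + t) : IsXLinearMod Z (consMap y Φ) := by
  intro p
  have hp : Φ p = Φ (X * divX p) + p.coeff 0 • (X * y + t) := by
    conv_lhs => rw [← X_mul_divX_add p, ← mul_one (C _), ← smul_eq_C_mul, map_add, map_smul, h1]
  have : consMap y Φ (X * p) - X * consMap y Φ p =
      (Φ (X * divX p) - X * Φ (divX p)) + p.coeff 0 • t := by
    rw [consMap_X_mul, consMap_apply, hp]
    simp only [smul_eq_C_mul]
    ring
  rw [this]
  exact add_mem (hΦ _) (Z.smul_mem _ ht)

theorem consMap_apply_eq_mul_add {y t q P : R[X]}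
    (hq : Φ (divX q) = divX q * (X * y + t) + (P - t * divX q)) :
    consMap y Φ q = q * y + P := by
  conv_rhs => rw [← X_mul_divX_add q]
  rw [consMap_apply, hq, smul_eq_C_mul]
  ring

theorem monic_divX {q : R[X]} (hq : q.Monic) (hdeg : 0 < q.natDegree) : (divX q).Monic := by
  rw [Monic, leadingCoeff, coeff_divX, natDegree_divX_eq_natDegree_tsub_one,
    Nat.sub_add_cancel hdeg]
  exact hq.coeff_natDegree

theorem degree_sub_coeff_smul_lt {g P : R[X]} {m : ℕ} (hg : g.Monic) (hgm : g.natDegree = m)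
    (hP : P.degree < (m + 1 : ℕ)) : (P - P.coeff m • g).degree < m := by
  rw [degree_lt_iff_coeff_zero] at hP ⊢
  intro j hj
  obtain rfl | hj := hj.eq_or_lt
  · simp [← hgm, hg.coeff_natDegree]
  · simp [hP j hj, coeff_eq_zero_of_natDegree_lt (hgm.trans_lt hj)]

theorem degree_sub_mul_X_pow_lt {z r : ℕ} {q Q : R[X]} (hq : q.Monic) (hQ : Q.Monic)
    (hqr : q.natDegree = r + 1) (hQr : Q.natDegree = r + 1 + z) (h : Q.nextCoeff = q.nextCoeff) :
    degree (Q - q * X ^ z) < (r + z : ℕ) := by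
  have hqc : q.coeff (r + 1) = 1 := hqr ▸ hq.coeff_natDegree
  have hQc : Q.coeff (r + 1 + z) = 1 := hQr ▸ hQ.coeff_natDegree
  rw [nextCoeff_of_natDegree_pos (by omega), nextCoeff_of_natDegree_pos (by omega), hqr, hQr,
    show r + 1 + z - 1 = r + z by omega, Nat.add_sub_cancel] at h
  refine (degree_lt_iff_coeff_zero _ _).2 fun m hm ↦ ?_
  obtain ⟨j, rfl⟩ : ∃ j, m = j + z := ⟨m - z, by omega⟩
  rw [coeff_sub, coeff_mul_X_pow, sub_eq_zero]
  obtain rfl | rfl | hj : j = r ∨ j = r + 1 ∨ r + 1 < j := by omega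
  · exact h
  · rw [hqc, hQc]
  · rw [coeff_eq_zero_of_natDegree_lt (by omega), coeff_eq_zero_of_natDegree_lt (by omega)]

variable [Nontrivial R]

theorem exists_isXLinearMod_of_natDegree_eq_two {z : ℕ} {q P : R[X]} (hq : q.Monic)
    (hdeg : q.natDegree = 2) (hP : P.degree < (2 * z : ℕ)) (y : R[X]) :
    ∃ Φ, IsXLinearMod (binaryForms R z) Φ ∧ Φ 1 = y ∧ Φ q = q * y + P := by
  obtain ⟨a, ha, b, hb, rfl⟩ := exists_eq_add_X_mul_of_degree_lt hP
  have hdeg₁ : (divX q).natDegree = 1 := by rw [natDegree_divX_eq_natDegree_tsub_one, hdeg]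
  have hdivX₂ : divX (divX q) = 1 := by
    refine (monic_divX (monic_divX hq (by omega)) (by omega)).natDegree_eq_zero.1 ?_
    rw [natDegree_divX_eq_natDegree_tsub_one, hdeg₁]
  have hdivX : divX q = X + C ((divX q).coeff 0) := by
    conv_lhs => rw [← X_mul_divX_add (divX q), hdivX₂, mul_one]
  let t := a - (divX q).coeff 0 • b
  have ht : t ∈ binaryForms R z := sub_mem ha (Submodule.smul_mem _ _ hb)
  let Φ₂ := LinearMap.mulRight R (X * (X * y + b) + t)
  let Φ₁ := consMap (X * y + b) Φ₂
  have hΦ₁ : IsXLinearMod (binaryForms R z) Φ₁ := (isXLinearMod_mulRight _ _).cons ht (one_mul _)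
  have hΦ₁q : Φ₁ (divX q) = divX q * (X * y + b) + (a + X * b - b * divX q) := by
    refine consMap_apply_eq_mul_add (t := t) ?_
    simp only [Φ₂, LinearMap.mulRight_apply, hdivX₂, t, smul_eq_C_mul]
    linear_combination b * hdivX
  exact ⟨consMap y Φ₁, hΦ₁.cons hb (consMap_one _ _), consMap_one _ _,
    consMap_apply_eq_mul_add hΦ₁q⟩

theorem exists_isXLinearMod {z r : ℕ} {q P : R[X]} (hq : q.Monic)
    (hdeg : q.natDegree = r + 2) (hP : P.degree < (2 * (z + 1) + r : ℕ)) (y : R[X]) :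
    ∃ Φ, IsXLinearMod (binaryForms R (z + 1)) Φ ∧ Φ 1 = y ∧ Φ q = q * y + P := by
  induction r generalizing q P y with
  | zero => exact exists_isXLinearMod_of_natDegree_eq_two hq hdeg hP y
  | succ r ih =>
    have hq' : (divX q).Monic := monic_divX hq (by omega)
    have hdeg' : (divX q).natDegree = r + 2 := by
      rw [natDegree_divX_eq_natDegree_tsub_one, hdeg]; rfl
    let c := P.coeff (2 * (z + 1) + r)
    let u : R[X] := (X ^ 2 + 1) ^ z
    have ht : c • u ∈ binaryForms R (z + 1) :=
      Submodule.smul_mem _ _ (by simpa using X_pow_mul_mem_binaryForms (R := R) (i := 0) rfl)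
    have hu : u.Monic := monic_X_sq_add_one_pow z
    have hudeg : (u * divX q).natDegree = 2 * (z + 1) + r := by
      rw [hu.natDegree_mul hq', natDegree_X_sq_add_one_pow, hdeg']; omega
    have hP' : (P - c • u * divX q).degree < (2 * (z + 1) + r : ℕ) := by
      rw [smul_mul_assoc]
      exact degree_sub_coeff_smul_lt (hu.mul hq') hudeg hP
    obtain ⟨Φ, hΦ, hΦ1, hΦq⟩ := ih hq' hdeg' hP' (X * y + c • u)
    exact ⟨consMap y Φ, hΦ.cons ht hΦ1, consMap_one y Φ, consMap_apply_eq_mul_add hΦq⟩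

-- The values prescribed on `X ^ l` are the basis vectors of `X * binaryForms R (i + k + 1)` with
-- `X`-exponent at most `i + 1`; for `k = 0` these are all of them.
theorem exists_isXLinearMod_apply_X_pow {i k r : ℕ} {q P : R[X]} (hq : q.Monic)
    (hdeg : q.natDegree = i + r + 2) (hP : P.degree < (2 * (i + k + 1) + r : ℕ)) :
    ∃ Φ, IsXLinearMod (binaryForms R (i + k + 1)) Φ ∧
      (∀ l ≤ i, Φ (X ^ l) = X ^ (i + 1 - l) * (X ^ 2 + 1) ^ (k + l)) ∧
      Φ q = q * (X ^ (i + 1) * (X ^ 2 + 1) ^ k) + P := by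
  induction i generalizing k q P with
  | zero =>
    rw [zero_add] at hP
    obtain ⟨Φ, hΦ, hΦ1, hΦq⟩ := exists_isXLinearMod hq (by omega) hP (X ^ 1 * (X ^ 2 + 1) ^ k)
    refine ⟨Φ, by rwa [zero_add], fun l hl ↦ ?_, hΦq⟩
    obtain rfl : l = 0 := by omega
    simpa using hΦ1
  | succ i ih =>
    have hq' : (divX q).Monic := monic_divX hq (by omega)
    have hdeg' : (divX q).natDegree = i + r + 2 := by
      rw [natDegree_divX_eq_natDegree_tsub_one, hdeg]; omega
    let t : R[X] := X ^ (i + 1) * (X ^ 2 + 1) ^ k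
    have ht : t ∈ binaryForms R (i + 1 + k + 1) := X_pow_mul_mem_binaryForms rfl
    have htdeg : (t * divX q).degree < (2 * (i + (k + 1) + 1) + r : ℕ) := by
      refine (degree_le_natDegree).trans_lt (Nat.cast_lt.2 ?_)
      have hu := monic_X_sq_add_one_pow (R := R) k
      rw [((monic_X_pow (i + 1)).mul hu).natDegree_mul hq', (monic_X_pow (i + 1)).natDegree_mul hu,
        natDegree_X_pow, natDegree_X_sq_add_one_pow, hdeg']
      omega
    have hz : i + (k + 1) + 1 = i + 1 + k + 1 := by ring
    have hP' : (P - t * divX q).degree < (2 * (i + (k + 1) + 1) + r : ℕ) :=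
      (degree_sub_le _ _).trans_lt (max_lt (hz ▸ hP) htdeg)
    obtain ⟨Φ, hΦ, hΦX, hΦq⟩ := ih (k := k + 1) hq' hdeg' hP'
    rw [hz] at hΦ
    let y : R[X] := X ^ (i + 2) * (X ^ 2 + 1) ^ k
    have hyt : X ^ (i + 1) * (X ^ 2 + 1) ^ (k + 1) = X * y + t := by
      simp only [y, t]; ring
    have hΦ1 : Φ 1 = X * y + t := by simpa [hyt] using hΦX 0 (Nat.zero_le i)
    rw [hyt] at hΦq
    refine ⟨consMap y Φ, hΦ.cons ht hΦ1, fun l hl ↦ ?_, consMap_apply_eq_mul_add hΦq⟩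
    cases l with
    | zero => simp [y]
    | succ l =>
      rw [pow_succ', consMap_X_mul, hΦX l (by omega), show i + 1 + 1 - (l + 1) = i + 1 - l by omega,
        show k + 1 + l = k + (l + 1) by ring]

theorem exists_isXLinearMod_apply_eq {z r : ℕ} (hz : 0 < z) (hzr : z < r) {q Q : R[X]}
    (hq : q.Monic) (hQ : Q.Monic) (hqr : q.natDegree = r) (hQr : Q.natDegree = r + z)
    (hnext : Q.nextCoeff = q.nextCoeff) :
    ∃ Φ, IsXLinearMod (binaryForms R z) Φ ∧
      (∀ b ∈ binaryForms R z, X * b ∈ (degreeLT R z).map Φ) ∧ Φ q = Q := by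
  obtain ⟨i, rfl⟩ : ∃ i, z = i + 1 := ⟨z - 1, by omega⟩
  obtain ⟨r, rfl⟩ : ∃ r', r = i + r' + 2 := ⟨r - i - 2, by omega⟩
  have hP : degree (Q - q * X ^ (i + 1)) < (2 * (i + 0 + 1) + r : ℕ) := by
    have h := degree_sub_mul_X_pow_lt hq hQ hqr hQr hnext
    rwa [show i + r + 1 + (i + 1) = 2 * (i + 0 + 1) + r by ring] at h
  obtain ⟨Φ, hΦ, hΦX, hΦq⟩ := exists_isXLinearMod_apply_X_pow (k := 0) hq hqr hP
  refine ⟨Φ, hΦ, fun b hb ↦ ?_, by rw [hΦq]; ring⟩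
  suffices binaryForms R (i + 1) ≤ ((degreeLT R (i + 1)).map Φ).comap (LinearMap.mulLeft R X) from
    this hb
  refine binaryForms_le_iff.2 fun j k hjk ↦ ⟨X ^ k, ?_, ?_⟩
  · exact mem_degreeLT.2 (by rw [degree_X_pow]; exact Nat.cast_lt.2 (by omega))
  · rw [hΦX k (by omega), LinearMap.mulLeft_apply, ← mul_assoc, ← pow_succ', zero_add,
      show i + 1 - k = j + 1 by omega]

theorem degreeLT_le_binaryForms_sup_map {z : ℕ} (hz : 0 < z) {Φ : R[X] →ₗ[R] R[X]}
    (hΦ : IsXLinearMod (binaryForms R z) Φ)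
    (hX : ∀ b ∈ binaryForms R z, X * b ∈ (degreeLT R z).map Φ) (d : ℕ) :
    degreeLT R (2 * z + d) ≤ binaryForms R z ⊔ (degreeLT R (z + d)).map Φ := by
  have hsmall {d : ℕ} {p : R[X]} (hp : p.degree < (2 * z : ℕ)) :
      p ∈ binaryForms R z ⊔ (degreeLT R (z + d)).map Φ := by
    obtain ⟨a, ha, b, hb, rfl⟩ := exists_eq_add_X_mul_of_degree_lt hp
    exact add_mem (Submodule.mem_sup_left ha)
      (Submodule.mem_sup_right (Submodule.map_mono (degreeLT_mono (by omega)) (hX b hb)))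
  induction d with
  | zero => exact fun p hp ↦ hsmall (mem_degreeLT.1 hp)
  | succ d ih =>
    intro p hp
    have hdivX : divX p ∈ degreeLT R (2 * z + d) := by
      rw [mem_degreeLT, degree_lt_iff_coeff_zero] at hp ⊢
      exact fun m hm ↦ (coeff_divX).trans (hp (m + 1) (by omega))
    obtain ⟨a, ha, _, ⟨g, hg, rfl⟩, hag⟩ := Submodule.mem_sup.1 (ih hdivX)
    have hXg : X * g ∈ degreeLT R (z + (d + 1)) := by
      rw [SetLike.mem_coe, mem_degreeLT, degree_lt_iff_coeff_zero] at hg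
      rw [mem_degreeLT, degree_lt_iff_coeff_zero]
      intro m hm
      obtain ⟨m, rfl⟩ : ∃ m', m = m' + 1 := ⟨m - 1, by omega⟩
      rw [coeff_X_mul, hg m (by omega)]
    have hp_eq : p = C (p.coeff 0) + X * a + (Φ (X * g) - (Φ (X * g) - X * Φ g)) := by
      conv_lhs => rw [← X_mul_divX_add p, ← hag]
      ring
    rw [hp_eq]
    refine add_mem (add_mem (hsmall ?_) ?_) (sub_mem ?_ (Submodule.mem_sup_left (hΦ g)))
    · exact degree_C_le.trans_lt (Nat.cast_pos.2 (by omega))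
    · exact Submodule.mem_sup_right (Submodule.map_mono (degreeLT_mono (by omega)) (hX a ha))
    · exact Submodule.mem_sup_right (Submodule.mem_map_of_mem hXg)

end XLinearModulo

section AdjoinRoot

/-- Multiplication by the root on `R[X] / (q)`: for monic `q`, the companion matrix of `q`. -/
noncomputable def mulRoot {R : Type*} [CommRing R] (q : R[X]) : Module.End R (AdjoinRoot q) :=
  LinearMap.mulLeft R (AdjoinRoot.root q)

section CommRing

variable {R : Type*} [CommRing R] {q Q : R[X]}

theorem mulRoot_mk (p : R[X]) : mulRoot q (AdjoinRoot.mk q p) = AdjoinRoot.mk q (X * p) := by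
  rw [mulRoot, LinearMap.mulLeft_apply, map_mul, AdjoinRoot.mk_X]

theorem aeval_mulRoot (p : R[X]) (x : AdjoinRoot q) :
    aeval (mulRoot q) p x = AdjoinRoot.mk q p * x := by
  have h : mulRoot q = Algebra.lmul R (AdjoinRoot q) (AdjoinRoot.root q) := rfl
  rw [h, aeval_algHom_apply, AdjoinRoot.aeval_eq]
  rfl

theorem aeval_mulRoot_eq_zero_iff {p : R[X]} : aeval (mulRoot q) p = 0 ↔ q ∣ p := by
  rw [← AdjoinRoot.mk_eq_zero]
  refine ⟨fun h ↦ ?_, fun h ↦ LinearMap.ext fun x ↦ ?_⟩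
  · rw [← mul_one (AdjoinRoot.mk q p), ← aeval_mulRoot, h, LinearMap.zero_apply]
  · rw [aeval_mulRoot, h, zero_mul, LinearMap.zero_apply]

theorem mulRoot_pow_eq_pow_iff {m k : ℕ} :
    mulRoot q ^ m = mulRoot q ^ k ↔ q ∣ X ^ m - X ^ k := by
  rw [← aeval_mulRoot_eq_zero_iff, map_sub, aeval_X_pow, aeval_X_pow, sub_eq_zero]

theorem isOfFinOrder_mulRoot {s : ℕ} (hs : 0 < s) (h : q ∣ X ^ s - 1) :
    IsOfFinOrder (mulRoot q) :=
  isOfFinOrder_iff_pow_eq_one.2 ⟨s, hs, (mulRoot_pow_eq_pow_iff (k := 0)).2 (by simpa using h)⟩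

theorem exists_linearMap_adjoinRoot (hq : q.Monic) {Φ : R[X] →ₗ[R] R[X]} (hΦ : Φ q = Q) :
    ∃ f : AdjoinRoot q →ₗ[R] AdjoinRoot Q,
      ∀ p, p.natDegree ≤ q.natDegree → f (AdjoinRoot.mk q p) = AdjoinRoot.mk Q (Φ p) := by
  refine ⟨(AdjoinRoot.mkₐ Q).toLinearMap ∘ₗ Φ ∘ₗ AdjoinRoot.modByMonicHom hq, fun p hp ↦ ?_⟩
  have hdiv : p /ₘ q = C ((p /ₘ q).coeff 0) :=
    eq_C_of_natDegree_eq_zero (by rw [natDegree_divByMonic p hq]; omega)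
  have hmod : p %ₘ q = p - (p /ₘ q).coeff 0 • q := by
    rw [modByMonic_eq_sub_mul_div, hdiv, smul_eq_C_mul, mul_comm]
    simp
  have hQ : AdjoinRoot.mkₐ Q Q = 0 := AdjoinRoot.mk_self
  simp only [LinearMap.comp_apply, AdjoinRoot.modByMonicHom_mk, hmod, map_sub, map_smul, hΦ,
    AlgHom.toLinearMap_apply, hQ, smul_zero, sub_zero]
  rfl

theorem exists_natDegree_lt_and_mk_eq (hq : q.Monic) (hdeg : 0 < q.natDegree) (x : AdjoinRoot q) :
    ∃ p : R[X], p.natDegree < q.natDegree ∧ AdjoinRoot.mk q p = x := by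
  obtain ⟨p, rfl⟩ := AdjoinRoot.mk_surjective x
  refine ⟨p %ₘ q, natDegree_modByMonic_lt p hq fun h ↦ by simp [h] at hdeg, ?_⟩
  rw [← AdjoinRoot.modByMonicHom_mk hq, AdjoinRoot.mk_leftInverse hq]

end CommRing

variable {F : Type*} [Field F] {q Q : F[X]}

theorem finrank_adjoinRoot (q : F[X]) : Module.finrank F (AdjoinRoot q) = q.natDegree :=
  finrank_quotient_span_eq_natDegree

instance finite_binaryForms (z : ℕ) : Module.Finite F (binaryForms F z) :=
  FiniteDimensional.span_of_finite F (Set.finite_range _)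

theorem finrank_binaryForms_le (z : ℕ) : Module.finrank F (binaryForms F z) ≤ z :=
  (finrank_range_le_card _).trans_eq (Fintype.card_fin z)

theorem exists_linearEquiv_prod_binaryForms_adjoinRoot {z : ℕ} (hz : 0 < z) (hzq : z ≤ q.natDegree)
    (hq : q.Monic) (hQ : Q.Monic) (hdeg : Q.natDegree = q.natDegree + z) {Φ : F[X] →ₗ[F] F[X]}
    (hΦ : IsXLinearMod (binaryForms F z) Φ)
    (hX : ∀ b ∈ binaryForms F z, X * b ∈ (degreeLT F z).map Φ) (hΦq : Φ q = Q) :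
    ∃ Θ : (AdjoinRoot q × binaryForms F z) ≃ₗ[F] AdjoinRoot Q,
      (∀ p, p.natDegree ≤ q.natDegree → Θ (AdjoinRoot.mk q p, 0) = AdjoinRoot.mk Q (Φ p)) ∧
      ∀ w : binaryForms F z, Θ (0, w) = AdjoinRoot.mk Q w := by
  obtain ⟨f, hf⟩ := exists_linearMap_adjoinRoot hq hΦq
  let g : binaryForms F z →ₗ[F] AdjoinRoot Q :=
    (AdjoinRoot.mkₐ Q).toLinearMap ∘ₗ Submodule.subtype _
  have hg (w : binaryForms F z) : g w = AdjoinRoot.mk Q w := rfl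
  have hsurj : Function.Surjective (f.coprod g) := by
    intro v
    obtain ⟨p, rfl⟩ := AdjoinRoot.mk_surjective v
    have hp : p %ₘ Q ∈ degreeLT F (2 * z + (q.natDegree - z)) := by
      rw [mem_degreeLT, show 2 * z + (q.natDegree - z) = Q.natDegree by omega,
        ← degree_eq_natDegree hQ.ne_zero]
      exact degree_modByMonic_lt p hQ
    obtain ⟨a, ha, _, ⟨b, hb, rfl⟩, hab⟩ :=
      Submodule.mem_sup.1 (degreeLT_le_binaryForms_sup_map hz hΦ hX _ hp)
    have hb' : b.natDegree ≤ q.natDegree :=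
      natDegree_le_of_degree_le (mem_degreeLT.1 hb).le |>.trans (by omega)
    refine ⟨(AdjoinRoot.mk q b, ⟨a, ha⟩), ?_⟩
    rw [LinearMap.coprod_apply, hf b hb', hg, add_comm, ← map_add, hab,
      ← AdjoinRoot.modByMonicHom_mk hQ, AdjoinRoot.mk_leftInverse hQ]
  have : Module.Finite F (AdjoinRoot q) := hq.finite_adjoinRoot
  have : Module.Finite F (AdjoinRoot Q) := hQ.finite_adjoinRoot
  have hrank : Module.finrank F (AdjoinRoot q × binaryForms F z) =
      Module.finrank F (AdjoinRoot Q) := by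
    refine le_antisymm ?_ (LinearMap.finrank_le_finrank_of_surjective hsurj)
    rw [Module.finrank_prod, finrank_adjoinRoot, finrank_adjoinRoot, hdeg]
    exact Nat.add_le_add_left (finrank_binaryForms_le z) _
  have hinj := (LinearMap.injective_iff_surjective_of_finrank_eq_finrank hrank).2 hsurj
  let Θ := LinearEquiv.ofBijective (f.coprod g) ⟨hinj, hsurj⟩
  have hΘ : ∀ x w, Θ (x, w) = f x + g w := fun _ _ ↦ rfl
  exact ⟨Θ, fun p hp ↦ by rw [hΘ, map_zero, add_zero, hf p hp],
    fun w ↦ by rw [hΘ, map_zero, zero_add, hg]⟩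

theorem hasTorsionBordering_mulRoot_of_nextCoeff_eq {z : ℕ} (hz : 0 < z) (hzq : z < q.natDegree)
    (hq : q.Monic) (hQ : Q.Monic) (hdeg : Q.natDegree = q.natDegree + z)
    (hnext : Q.nextCoeff = q.nextCoeff) (hfin : IsOfFinOrder (mulRoot Q)) :
    HasTorsionBordering (mulRoot q) (Fin z → F) := by
  obtain ⟨Φ, hΦ, hX, hΦq⟩ := exists_isXLinearMod_apply_eq hz hzq hq hQ rfl hdeg hnext
  obtain ⟨Θ, hΘq, hΘ⟩ :=
    exists_linearEquiv_prod_binaryForms_adjoinRoot hz hzq.le hq hQ hdeg hΦ hX hΦq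
  have : Module.Finite F (AdjoinRoot q) := hq.finite_adjoinRoot
  have hrank : Module.finrank F (binaryForms F z) = Module.finrank F (Fin z → F) := by
    have h := Θ.finrank_eq
    rw [Module.finrank_prod, finrank_adjoinRoot, finrank_adjoinRoot, hdeg] at h
    rw [Module.finrank_fin_fun, Nat.add_left_cancel h]
  have hbinary : HasTorsionBordering (mulRoot q) (binaryForms F z) := by
    refine .of_linearEquiv hfin Θ (fun x ↦ ?_) fun w ↦ ?_
    · obtain ⟨p, hp, rfl⟩ := exists_natDegree_lt_and_mk_eq hq (by omega) x
      have hXp : (X * p).natDegree ≤ q.natDegree := by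
        refine natDegree_mul_le.trans ?_
        rw [natDegree_X]
        omega
      let w : binaryForms F z := ⟨X * Φ p - Φ (X * p), neg_sub (Φ (X * p)) _ ▸ neg_mem (hΦ p)⟩
      refine ⟨w, ?_⟩
      rw [← add_zero (mulRoot q _), ← zero_add w, ← Prod.mk_add_mk, map_add, mulRoot_mk,
        hΘq p hp.le, hΘq _ hXp, hΘ, mulRoot_mk, ← map_add, add_sub_cancel]
    · obtain ⟨p, hp, hXp⟩ := hX w w.2
      have hp' : p.natDegree ≤ q.natDegree :=
        natDegree_le_of_degree_le (mem_degreeLT.1 hp).le |>.trans hzq.le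
      exact ⟨AdjoinRoot.mk q p, by rw [hΘ, hΘq p hp', hXp, mulRoot_mk]⟩
  exact hbinary.congr (.refl F _) (fun _ ↦ rfl) (.ofFinrankEq _ _ hrank)

end AdjoinRoot

section TorsionTraces

theorem nextCoeff_expand_eq_zero {R : Type*} [CommRing R] {p : ℕ} (hp : 2 ≤ p) (f : R[X]) :
    (expand R p f).nextCoeff = 0 := by
  rw [nextCoeff_eq_zero, natDegree_expand, or_iff_not_imp_left]
  refine fun h ↦ ⟨Nat.pos_of_ne_zero h, ?_⟩
  rw [coeff_expand (by omega), if_neg]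
  rw [Nat.dvd_sub_iff_right (Nat.pos_of_ne_zero h) (dvd_mul_left p _)]
  exact fun h1 ↦ absurd (Nat.le_of_dvd one_pos h1) (by omega)

theorem nextCoeff_cyclotomic (R : Type*) [CommRing R] {n : ℕ} (hn : 0 < n) :
    (cyclotomic n R).nextCoeff = 0 ∨ (cyclotomic n R).nextCoeff = 1 ∨
      (cyclotomic n R).nextCoeff = -1 := by
  induction n using Nat.strong_induction_on with
  | _ n ih =>
    obtain rfl | hn1 := eq_or_ne n 1
    · rw [cyclotomic_one]
      exact Or.inr (Or.inr (by simpa using nextCoeff_X_sub_C (1 : R)))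
    have hp : n.minFac.Prime := Nat.minFac_prime hn1
    obtain ⟨m, hm⟩ := Nat.minFac_dvd n
    generalize n.minFac = p at hp hm
    subst hm
    have hm0 : 0 < m := Nat.pos_of_mul_pos_left hn
    rw [mul_comm]
    by_cases hpm : p ∣ m
    · rw [← cyclotomic_expand_eq_cyclotomic hp hpm]
      exact Or.inl (nextCoeff_expand_eq_zero hp.two_le _)
    · have hsum : 0 = (cyclotomic (m * p) R).nextCoeff + (cyclotomic m R).nextCoeff := by
        rw [← (cyclotomic.monic _ R).nextCoeff_mul (cyclotomic.monic _ R),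
          ← cyclotomic_expand_eq_cyclotomic_mul hp hpm, nextCoeff_expand_eq_zero hp.two_le]
      rw [eq_neg_of_add_eq_zero_left hsum.symm, neg_eq_zero, neg_eq_iff_eq_neg, neg_inj,
        or_comm (a := _ = -1)]
      exact ih m (lt_mul_of_one_lt_left hm0 hp.one_lt) hm0

/-- Every cyclic block of finite order with primary minimal polynomial `p ^ e` has trace zero or a
root of unity; the trace is encoded as `(p ^ e).nextCoeff`, which is its negative. -/
def HasTorsionTraces (F : Type*) [Field F] : Prop :=
  ∀ (p : F[X]) (e d : ℕ), p.Monic → Irreducible p → 0 < d → p ^ e ∣ X ^ d - 1 →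
    (p ^ e).nextCoeff = 0 ∨ IsOfFinOrder (p ^ e).nextCoeff

variable {F : Type*} [Field F]

theorem isOfFinOrder_of_isIntegral_zmod {p : ℕ} [Fact p.Prime] [Algebra (ZMod p) F] {c : F}
    (hc : IsIntegral (ZMod p) c) (hc0 : c ≠ 0) : IsOfFinOrder c := by
  let K := IntermediateField.adjoin (ZMod p) {c}
  have : FiniteDimensional (ZMod p) K := IntermediateField.adjoin.finiteDimensional hc
  have : Finite K := Module.finite_of_finite (ZMod p)
  let u : Kˣ := Units.mk0 ⟨c, IntermediateField.mem_adjoin_simple_self (ZMod p) c⟩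
    fun h ↦ hc0 (congrArg Subtype.val h)
  exact ((algebraMap K F).toMonoidHom.comp (Units.coeHom K)).isOfFinOrder
    (isOfFinOrder_of_finite u)

theorem hasTorsionTraces_of_charP (p : ℕ) [Fact p.Prime] [CharP F p] : HasTorsionTraces F := by
  intro f e d hf _ hd hfd
  let _ : Algebra (ZMod p) F := ZMod.algebra F p
  have hlift := integralClosure.mem_lifts_of_monic_of_dvd_map F (R := ZMod p)
    (monic_X_pow_sub_C 1 hd.ne') (hf.pow e) (by simpa using hfd)
  have hint : IsIntegral (ZMod p) (f ^ e).nextCoeff := by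
    rw [nextCoeff]
    split_ifs with h
    · exact isIntegral_zero
    · obtain ⟨c, hc⟩ := (lifts_iff_coeff_lifts _).1 hlift ((f ^ e).natDegree - 1)
      exact hc ▸ c.2
  exact or_iff_not_imp_left.2 (isOfFinOrder_of_isIntegral_zmod hint)

theorem exponent_le_one_of_pow_dvd_X_pow_sub_one [CharZero F] {p : F[X]} {e d : ℕ}
    (hp : Irreducible p) (hd : 0 < d) (h : p ^ e ∣ X ^ d - 1) : e ≤ 1 := by
  have hsep : (X ^ d - 1 : F[X]).Separable :=
    X_pow_sub_one_separable_iff.2 (Nat.cast_ne_zero.2 hd.ne')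
  by_contra! he
  refine hp.not_isUnit (hsep.squarefree p ?_)
  rw [← sq]
  exact (pow_dvd_pow p he).trans h

theorem hasTorsionTraces_of_irreducible [CharZero F]
    (h : ∀ (p : F[X]) (d : ℕ), p.Monic → Irreducible p → 0 < d → p ∣ X ^ d - 1 →
      p.nextCoeff = 0 ∨ IsOfFinOrder p.nextCoeff) : HasTorsionTraces F := by
  intro p e d hp hirr hd hdvd
  obtain rfl | rfl := Nat.le_one_iff_eq_zero_or_eq_one.1
    (exponent_le_one_of_pow_dvd_X_pow_sub_one hirr hd hdvd)
  · left
    rw [pow_zero, ← C_1, nextCoeff_C_eq_zero]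
  · rw [pow_one] at hdvd ⊢
    exact h p d hp hirr hd hdvd

theorem hasTorsionTraces_of_isAlgClosed [IsAlgClosed F] [CharZero F] : HasTorsionTraces F := by
  refine hasTorsionTraces_of_irreducible fun p d hp hirr hd hdvd ↦ ?_
  have hdeg := IsAlgClosed.degree_eq_one_of_irreducible F hirr
  obtain ⟨c, rfl⟩ : ∃ c, p = X + C c :=
    ⟨p.coeff 0, hp.eq_X_add_C (natDegree_eq_of_degree_eq_some hdeg)⟩
  have hroot : (-c) ^ d = 1 := by
    have h := dvd_iff_isRoot.1 (show X - C (-c) ∣ (X ^ d - 1 : F[X]) by simpa using hdvd)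
    simpa [sub_eq_zero] using h
  right
  rw [nextCoeff_X_add_C, ← neg_neg c, neg_eq_neg_one_mul]
  exact (isOfFinOrder_iff_pow_eq_one.2 ⟨2, two_pos, neg_one_sq⟩).mul
    (isOfFinOrder_iff_pow_eq_one.2 ⟨d, hd, hroot⟩)

theorem hasTorsionTraces_rat : HasTorsionTraces ℚ := by
  refine hasTorsionTraces_of_irreducible fun p d hp hirr hd hdvd ↦ ?_
  rw [← prod_cyclotomic_eq_X_pow_sub_one hd] at hdvd
  obtain ⟨i, hi, hpi⟩ := hirr.prime.exists_mem_finset_dvd hdvd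
  have hi0 : 0 < i := Nat.pos_of_mem_divisors hi
  obtain rfl : p = cyclotomic i ℚ := eq_of_monic_of_associated hp (cyclotomic.monic i ℚ)
    (hirr.associated_of_dvd (cyclotomic.irreducible_rat hi0) hpi)
  obtain h | h | h := nextCoeff_cyclotomic ℚ hi0
  · exact Or.inl h
  · exact Or.inr (h ▸ IsOfFinOrder.one)
  · exact Or.inr (isOfFinOrder_iff_pow_eq_one.2 ⟨2, two_pos, by rw [h, neg_one_sq]⟩)

theorem HasTorsionTraces.of_ringEquiv {K : Type*} [Field K] (hK : HasTorsionTraces K)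
    (φ : F ≃+* K) : HasTorsionTraces F := by
  intro p e d hp hirr hd hdvd
  have hφ : Function.Injective (φ : F →+* K) := φ.injective
  have hirr' : Irreducible (p.map (φ : F →+* K)) :=
    (MulEquiv.irreducible_iff (mapEquiv φ)).2 hirr
  have h := hK (p.map φ) e d (hp.map _) hirr' hd
    (by simpa using Polynomial.map_dvd (φ : F →+* K) hdvd)
  rw [← Polynomial.map_pow, nextCoeff_map hφ] at h
  exact h.imp (map_eq_zero_iff _ hφ).1 (Function.Injective.isOfFinOrder_iff hφ).1

theorem hasTorsionTraces
    (hF : Nonempty (F ≃+* ℚ) ∨ (IsAlgClosed F ∧ CharZero F) ∨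
      (∃ p : ℕ, p.Prime ∧ CharP F p)) : HasTorsionTraces F := by
  obtain ⟨⟨φ⟩⟩ | ⟨_, _⟩ | ⟨p, hp, _⟩ := hF
  · exact hasTorsionTraces_rat.of_ringEquiv φ
  · exact hasTorsionTraces_of_isAlgClosed
  · have : Fact p.Prime := ⟨hp⟩
    exact hasTorsionTraces_of_charP p

end TorsionTraces

section PrimaryBlocks

theorem isOfFinOrder_of_injective_of_pow_eq_pow {R E : Type*} [Semiring R] [AddCommMonoid E]
    [Module R E] {f : Module.End R E} (hf : Function.Injective f) {m k : ℕ} (hkm : k < m)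
    (h : f ^ m = f ^ k) : IsOfFinOrder f := by
  refine isOfFinOrder_iff_pow_eq_one.2 ⟨m - k, Nat.sub_pos_of_lt hkm, LinearMap.ext fun x ↦ ?_⟩
  have hfk : Function.Injective (f ^ k) := by
    rw [Module.End.coe_pow]
    exact hf.iterate k
  apply hfk
  rw [← Module.End.mul_apply, ← pow_add, Nat.add_sub_cancel' hkm.le, h, Module.End.one_apply]

variable {F : Type*} [Field F] {p : F[X]} {e m k z : ℕ}

theorem eq_X_or_pow_dvd_X_pow_sub_one (hp : p.Monic) (hirr : Irreducible p) (hkm : k ≤ m)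
    (h : p ^ e ∣ X ^ m - X ^ k) : p = X ∨ p ^ e ∣ X ^ (m - k) - 1 := by
  by_cases hpX : p ∣ X
  · exact Or.inl <| eq_of_monic_of_associated hp monic_X (hirr.associated_of_dvd irreducible_X hpX)
  · have hcop : IsCoprime (p ^ e) (X ^ k) := (hirr.coprime_iff_not_dvd.2 hpX).pow
    refine Or.inr (hcop.dvd_of_dvd_mul_left ?_)
    rwa [mul_sub, ← pow_add, mul_one, Nat.add_sub_cancel' hkm]

theorem hasTorsionBordering_mulRoot_X_pow (F : Type*) [Field F] (e : ℕ) :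
    HasTorsionBordering (mulRoot (X ^ e : F[X])) (AdjoinRoot (X ^ e : F[X])) := by
  obtain _ | r := e
  · exact .self (isOfFinOrder_mulRoot one_pos (by simp))
  have hnil : mulRoot (X ^ (r + 1) : F[X]) ^ (r + 1) = 0 := by
    simpa using (aeval_mulRoot_eq_zero_iff (q := (X ^ (r + 1) : F[X]))).2 dvd_rfl
  by_cases h2 : (2 : F) = 0
  · have : CharP F 2 := CharTwo.of_one_ne_zero_of_two_eq_zero one_ne_zero h2
    exact .of_isNilpotent_of_charP 2 ⟨r + 1, hnil⟩
  · have : Invertible (2 : F) := invertibleOfNonzero h2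
    let b := (AdjoinRoot.powerBasis' (monic_X_pow (R := F) (r + 1))).basis.reindex
      (finCongr (natDegree_X_pow (r + 1)))
    refine .of_pow_eq_zero b (v := 1) (fun i ↦ ?_) hnil
    rw [mulRoot, LinearMap.pow_mulLeft, LinearMap.mulLeft_apply, mul_one,
      Module.Basis.reindex_apply, PowerBasis.basis_eq_pow]
    rfl

theorem hasTorsionBordering_mulRoot_self (hp : p.Monic) (hirr : Irreducible p) (hkm : k < m)
    (h : p ^ e ∣ X ^ m - X ^ k) : HasTorsionBordering (mulRoot (p ^ e)) (AdjoinRoot (p ^ e)) := by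
  obtain rfl | h1 := eq_X_or_pow_dvd_X_pow_sub_one hp hirr hkm.le h
  · exact hasTorsionBordering_mulRoot_X_pow F e
  · exact .self (isOfFinOrder_mulRoot (Nat.sub_pos_of_lt hkm) h1)

theorem HasTorsionTraces.nextCoeff_pow (hF : HasTorsionTraces F) (hp : p.Monic)
    (hirr : Irreducible p) (hkm : k < m) (h : p ^ e ∣ X ^ m - X ^ k) (he : 2 ≤ (p ^ e).natDegree) :
    (p ^ e).nextCoeff = 0 ∨ IsOfFinOrder (p ^ e).nextCoeff := by
  obtain rfl | h1 := eq_X_or_pow_dvd_X_pow_sub_one hp hirr hkm.le h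
  · left
    rw [natDegree_X_pow] at he
    rw [nextCoeff_of_natDegree_pos (by rw [natDegree_X_pow]; omega), natDegree_X_pow,
      coeff_X_pow, if_neg (by omega)]
  · exact hF p e (m - k) hp hirr (Nat.sub_pos_of_lt hkm) h1

theorem HasTorsionTraces.hasTorsionBordering_mulRoot (hF : HasTorsionTraces F) (hp : p.Monic)
    (hirr : Irreducible p) (hkm : k < m) (h : p ^ e ∣ X ^ m - X ^ k)
    (hker : Module.finrank F (LinearMap.ker (mulRoot (p ^ e))) ≤ z) (hz : z ≤ (p ^ e).natDegree) :
    HasTorsionBordering (mulRoot (p ^ e)) (Fin z → F) := by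
  have hq : (p ^ e).Monic := hp.pow e
  have hfin : Module.Finite F (AdjoinRoot (p ^ e)) := hq.finite_adjoinRoot
  obtain rfl | hz0 := Nat.eq_zero_or_pos z
  · have hinj : Function.Injective (mulRoot (p ^ e)) :=
      LinearMap.ker_eq_bot.1 (Submodule.finrank_eq_zero.1 (Nat.le_zero.1 hker))
    refine .of_isOfFinOrder <|
      isOfFinOrder_of_injective_of_pow_eq_pow hinj hkm (mulRoot_pow_eq_pow_iff.2 h)
  obtain rfl | hzq := hz.eq_or_lt
  · have f : AdjoinRoot (p ^ e) ≃ₗ[F] (Fin (p ^ e).natDegree → F) :=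
      .ofFinrankEq _ _ (by rw [finrank_adjoinRoot, Module.finrank_fin_fun])
    exact (hasTorsionBordering_mulRoot_self hp hirr hkm h).congr (.refl F _) (fun _ ↦ rfl) f
  · obtain ⟨Q, hQ, hQdeg, hQnext, s, hs, hQs⟩ := exists_monic_dvd_X_pow_sub_one
      (hF.nextCoeff_pow hp hirr hkm h (by omega)) (m := (p ^ e).natDegree + z) (by omega)
    exact hasTorsionBordering_mulRoot_of_nextCoeff_eq hz0 hzq hq hQ hQdeg hQnext
      (isOfFinOrder_mulRoot hs hQs)

end PrimaryBlocks

section Decomposition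

theorem exists_linearEquiv_adjoinRoot {R : Type*} [CommRing R] [IsDomain R] {p q : R[X]}
    (h : Associated p q) : ∃ g : (R[X] ⧸ Submodule.span R[X] {p}) ≃ₗ[R] AdjoinRoot q,
      ∀ x, g ((X : R[X]) • x) = mulRoot q (g x) := by
  have hspan : Submodule.span R[X] {p} = Ideal.span {q} :=
    Ideal.span_singleton_eq_span_singleton.2 h
  let g : (R[X] ⧸ Submodule.span R[X] {p}) ≃ₗ[R] AdjoinRoot q :=
    { (Submodule.quotEquivOfEq _ _ hspan).toAddEquiv with
      map_smul' := fun c x ↦ by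
        induction x using Submodule.Quotient.induction_on
        rfl }
  refine ⟨g, fun x ↦ ?_⟩
  induction x using Submodule.Quotient.induction_on
  rfl

theorem finrank_ker_piMap {F ι : Type*} [Field F] [Fintype ι] {E : ι → Type*}
    [∀ i, AddCommGroup (E i)] [∀ i, Module F (E i)] [∀ i, Module.Finite F (E i)]
    (C : ∀ i, Module.End F (E i)) :
    Module.finrank F (LinearMap.ker (LinearMap.piMap C)) =
      ∑ i, Module.finrank F (LinearMap.ker (C i)) := by
  rw [← Module.finrank_pi_fintype]
  refine LinearEquiv.finrank_eq
    { toFun := fun x i ↦ ⟨x.1 i, congrFun x.2 i⟩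
      invFun := fun x ↦ ⟨fun i ↦ x i, funext fun i ↦ (x i).2⟩
      map_add' := fun _ _ ↦ rfl
      map_smul' := fun _ _ ↦ rfl }

theorem exists_le_le_sum_eq {ι : Type*} [Fintype ι] {a b : ι → ℕ} (hab : a ≤ b) {z : ℕ}
    (ha : ∑ i, a i ≤ z) (hb : z ≤ ∑ i, b i) : ∃ c, a ≤ c ∧ c ≤ b ∧ ∑ i, c i = z := by
  classical
  induction z, ha using Nat.le_induction with
  | base => exact ⟨a, le_rfl, hab, rfl⟩
  | succ z _ ih =>
    obtain ⟨c, hac, hcb, hc⟩ := ih (by omega)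
    obtain ⟨i, _, hi⟩ := Finset.exists_lt_of_sum_lt (s := Finset.univ) (f := c) (g := b) (by omega)
    refine ⟨c + Pi.single i 1, hac.trans (by simp), fun j ↦ ?_, ?_⟩
    · obtain rfl | hj := eq_or_ne j i
      · simpa using hi
      · simpa [Pi.single_eq_of_ne hj] using hcb j
    · simp [Finset.sum_add_distrib, hc]

universe u

variable {F : Type u} [Field F] {E Z : Type*} [AddCommGroup E] [Module F E] [Module.Finite F E]
  [AddCommGroup Z] [Module F Z] [Module.Finite F Z]

theorem exists_linearEquiv_pi_adjoinRoot (C : Module.End F E) :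
    ∃ (ι : Type u) (_ : Fintype ι) (p : ι → F[X]) (e : ι → ℕ),
      (∀ i, (p i).Monic) ∧ (∀ i, Irreducible (p i)) ∧
      ∃ Ψ : E ≃ₗ[F] ∀ i, AdjoinRoot (p i ^ e i),
        ∀ x, Ψ (C x) = LinearMap.piMap (fun i ↦ mulRoot (p i ^ e i)) (Ψ x) := by
  classical
  obtain ⟨ι, _, p, hp, e, ⟨L⟩⟩ := Module.equiv_directSum_of_isTorsion (R := F[X])
    (M := Module.AEval' C) (Module.AEval.isTorsion_of_finiteDimensional F E C)
  have hassoc (i) : Associated (p i ^ e i) (normalize (p i) ^ e i) :=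
    (associated_normalize (p i)).pow_pow
  choose g hg using fun i ↦ exists_linearEquiv_adjoinRoot (hassoc i)
  let L' := L.trans (DirectSum.linearEquivFunOnFintype F[X] ι
    fun i ↦ F[X] ⧸ Submodule.span F[X] {p i ^ e i})
  refine ⟨ι, inferInstance, fun i ↦ normalize (p i), e, fun i ↦ monic_normalize (hp i).ne_zero,
    fun i ↦ (associated_normalize (p i)).irreducible (hp i),
    (Module.AEval'.of C).trans ((L'.restrictScalars F).trans (LinearEquiv.piCongrRight g)),
    fun x ↦ funext fun i ↦ ?_⟩
  have hL : L' (Module.AEval'.of C (C x)) = (X : F[X]) • L' (Module.AEval'.of C x) := by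
    rw [← Module.AEval'.X_smul_of, map_smul]
  calc
    g i (L' (Module.AEval'.of C (C x)) i) = g i ((X : F[X]) • L' (Module.AEval'.of C x) i) := by
      rw [hL, Pi.smul_apply]
    _ = mulRoot _ (g i (L' (Module.AEval'.of C x) i)) := hg i _

theorem HasTorsionTraces.hasTorsionBordering (hF : HasTorsionTraces F) {C : Module.End F E}
    {m k : ℕ} (hkm : k < m) (hC : C ^ m = C ^ k)
    (hker : Module.finrank F (LinearMap.ker C) ≤ Module.finrank F Z)
    (hE : Module.finrank F Z ≤ Module.finrank F E) : HasTorsionBordering C Z := by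
  obtain ⟨ι, _, p, e, hp, hirr, Ψ, hΨ⟩ := exists_linearEquiv_pi_adjoinRoot C
  let D (i : ι) : Module.End F (AdjoinRoot (p i ^ e i)) := mulRoot (p i ^ e i)
  have hfin (i) : Module.Finite F (AdjoinRoot (p i ^ e i)) := ((hp i).pow (e i)).finite_adjoinRoot
  have hdvd (i) : p i ^ e i ∣ X ^ m - X ^ k := by
    let π : E →ₗ[F] AdjoinRoot (p i ^ e i) := LinearMap.proj i ∘ₗ Ψ.toLinearMap
    have hπ : Function.Surjective π := (Function.surjective_eval i).comp Ψ.surjective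
    have hcomm : D i ∘ₗ π = π ∘ₗ C := LinearMap.ext fun x ↦ (congrFun (hΨ x) i).symm
    rw [← mulRoot_pow_eq_pow_iff, ← LinearMap.cancel_right hπ,
      Module.End.commute_pow_left_of_commute hcomm, hC,
      Module.End.commute_pow_left_of_commute hcomm]
  have hkerD : ∑ i, Module.finrank F (LinearMap.ker (D i)) =
      Module.finrank F (LinearMap.ker C) := by
    have hcomap : LinearMap.ker C = (LinearMap.ker (LinearMap.piMap D)).comap Ψ.toLinearMap := by
      ext x
      rw [Submodule.mem_comap, LinearMap.mem_ker, LinearMap.mem_ker, LinearEquiv.coe_coe, ← hΨ,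
        Ψ.map_eq_zero_iff]
    rw [← finrank_ker_piMap, hcomap]
    exact (Ψ.ofSubmodule' _).finrank_eq.symm
  have hdeg : ∑ i, (p i ^ e i).natDegree = Module.finrank F E := by
    simp only [Ψ.finrank_eq, Module.finrank_pi_fintype, finrank_adjoinRoot]
  have hle (i) : Module.finrank F (LinearMap.ker (D i)) ≤ (p i ^ e i).natDegree :=
    (Submodule.finrank_le _).trans_eq (finrank_adjoinRoot _)
  obtain ⟨c, hkerc, hcdeg, hc⟩ := exists_le_le_sum_eq hle (hkerD.trans_le hker)
    (hE.trans_eq hdeg.symm)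
  have hZ : Module.finrank F (∀ i, Fin (c i) → F) = Module.finrank F Z := by
    rw [← hc, Module.finrank_pi_fintype]
    simp only [Module.finrank_fin_fun]
  have hD (i) : HasTorsionBordering (D i) (Fin (c i) → F) :=
    hF.hasTorsionBordering_mulRoot (hp i) (hirr i) hkm (hdvd i) (hkerc i) (hcdeg i)
  refine (HasTorsionBordering.pi hD).congr Ψ.symm (fun x ↦ ?_) (.ofFinrankEq _ _ hZ)
  rw [LinearEquiv.symm_apply_eq, hΨ, Ψ.apply_symm_apply]

end Decomposition

section SquareZero

variable {F V W : Type*} [Field F] [AddCommGroup V] [Module F V] [AddCommGroup W] [Module F W]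

theorem exists_injective_extend [Module.Finite F V] [Module.Finite F W] {A : Submodule F V}
    {j : A →ₗ[F] W} (hj : Function.Injective j) (h : Module.finrank F V ≤ Module.finrank F W) :
    ∃ κ : V →ₗ[F] W, Function.Injective κ ∧ ∀ a : A, κ a = j a := by
  obtain ⟨B, hB⟩ := A.exists_isCompl
  obtain ⟨S, hS⟩ := (LinearMap.range j).exists_isCompl
  have hBS : Module.finrank F B ≤ Module.finrank F S := by
    have h₁ := Submodule.finrank_add_eq_of_isCompl hB
    have h₂ := Submodule.finrank_add_eq_of_isCompl hS
    rw [LinearMap.finrank_range_of_inj hj] at h₂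
    omega
  obtain ⟨g, hg⟩ := finrank_le_iff_exists_linearMap.1 hBS
  have hgS : Function.Injective (S.subtype ∘ₗ g) := S.injective_subtype.comp hg
  have hcoprod : Function.Injective (j.coprod (S.subtype ∘ₗ g)) := by
    rw [← LinearMap.ker_eq_bot, LinearMap.ker_coprod_of_disjoint_range, LinearMap.ker_eq_bot.2 hj,
      LinearMap.ker_eq_bot.2 hgS, Submodule.prod_bot]
    exact hS.disjoint.mono_right ((LinearMap.range_comp_le_range _ _).trans_eq S.range_subtype)
  exact ⟨.ofIsCompl hB j (S.subtype ∘ₗ g), hcoprod.comp (LinearEquiv.injective _),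
    LinearMap.ofIsCompl_apply_left hB⟩

theorem exists_extend_of_eqOn_inf {A B : Submodule F V} {φ : A →ₗ[F] W} {κ : B →ₗ[F] W}
    (h : ∀ (a : A) (b : B), (a : V) = b → φ a = κ b) :
    ∃ ψ : V →ₗ[F] W, (∀ a : A, ψ a = φ a) ∧ ∀ b : B, ψ b = κ b := by
  let f : V →ₗ.[F] W := ⟨A, φ⟩
  let g : V →ₗ.[F] W := ⟨B, κ⟩
  obtain ⟨ψ, hψ⟩ := (f.sup g h).toFun.exists_extend
  refine ⟨ψ, fun a ↦ ?_, fun b ↦ ?_⟩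
  · exact (LinearMap.congr_fun hψ ⟨a, Submodule.mem_sup_left a.2⟩).trans
      ((f.left_le_sup g h).2 rfl).symm
  · exact (LinearMap.congr_fun hψ ⟨b, Submodule.mem_sup_right b.2⟩).trans
      ((f.right_le_sup g h).2 rfl).symm

theorem exists_extend_injOn [Module.Finite F V] [Module.Finite F W] {A B : Submodule F V}
    {φ : A →ₗ[F] W} (hφ : ∀ a : A, (a : V) ∈ B → φ a = 0 → a = 0)
    (h : Module.finrank F B ≤ Module.finrank F W) :
    ∃ ψ : V →ₗ[F] W, (∀ a : A, ψ a = φ a) ∧ ∀ b ∈ B, ψ b = 0 → b = 0 := by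
  let j : A.comap B.subtype →ₗ[F] W := φ ∘ₗ B.subtype.restrict fun _ hx ↦ hx
  have hj : Function.Injective j := (injective_iff_map_eq_zero j).2 fun x hx ↦ by
    have h0 : (x : V) = 0 := congrArg Subtype.val (hφ ⟨x, x.2⟩ x.1.2 hx)
    exact Subtype.ext (Subtype.ext h0)
  obtain ⟨κ, hκ, hκj⟩ := exists_injective_extend hj h
  obtain ⟨ψ, hψA, hψB⟩ := exists_extend_of_eqOn_inf (φ := φ) (κ := κ) <| by
    rintro ⟨_, ha⟩ b rfl
    exact (hκj ⟨b, ha⟩).symm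
  refine ⟨ψ, hψA, fun b hb h0 ↦ ?_⟩
  rw [hψB ⟨b, hb⟩, map_eq_zero_iff κ hκ] at h0
  exact congrArg Subtype.val h0

variable [Module.Finite F V] {f : Module.End F V}

theorem exists_linearEquiv_range_prod_ker {φ : LinearMap.range f →ₗ[F] LinearMap.ker f}
    (hφ : ∀ y : LinearMap.range f, f y = 0 → φ y = 0 → y = 0) :
    ∃ Θ : V ≃ₗ[F] LinearMap.range f × LinearMap.ker f,
      ∀ x, (Θ x).1 = f.rangeRestrict x ∧ (Θ (f x)).2 = φ (f.rangeRestrict x) := by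
  obtain ⟨ψ, hψφ, hψ⟩ := exists_extend_injOn (B := LinearMap.ker f) hφ le_rfl
  have hinj : Function.Injective (f.rangeRestrict.prod ψ) :=
    (injective_iff_map_eq_zero _).2 fun x hx ↦
      hψ x (congrArg Subtype.val (congrArg Prod.fst hx)) (congrArg Prod.snd hx)
  have hrank : Module.finrank F V = Module.finrank F (LinearMap.range f × LinearMap.ker f) := by
    rw [Module.finrank_prod, LinearMap.finrank_range_add_finrank_ker]
  exact ⟨LinearEquiv.ofBijective _
    ⟨hinj, (LinearMap.injective_iff_surjective_of_finrank_eq_finrank hrank).1 hinj⟩,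
    fun x ↦ ⟨rfl, hψφ (f.rangeRestrict x)⟩⟩

theorem HasTorsionBordering.exists_add_sq_eq_zero {C : Module.End F (LinearMap.range f)}
    (hC : ∀ y, (C y : V) = f y) (h : HasTorsionBordering C (LinearMap.ker f)) :
    ∃ T N : Module.End F V, IsOfFinOrder T ∧ N ^ 2 = 0 ∧ f = T + N := by
  obtain ⟨T, hT, hTC, hT0⟩ := h
  have hTinj : Function.Injective T := ((Module.End.isUnit_iff T).1 hT.isUnit).1
  obtain ⟨Θ, hΘ⟩ := exists_linearEquiv_range_prod_ker
    (φ := LinearMap.snd F _ _ ∘ₗ T ∘ₗ LinearMap.inl F _ _) fun y hy hy0 ↦ by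
      have h0 : T (y, 0) = 0 := Prod.ext (by rw [hTC]; exact Subtype.ext ((hC y).trans hy)) hy0
      exact congrArg Prod.fst ((map_eq_zero_iff T hTinj).1 h0)
  let S : Module.End F V := Θ.symm.conjAlgEquiv F T
  have hS : IsOfFinOrder S := (Θ.symm.conjAlgEquiv F).toMonoidHom.isOfFinOrder hT
  have hN (x : V) : Θ ((f - S) x) = (-(T (0, (Θ x).2)).1, 0) := by
    have hsplit : T (Θ x) = T ((Θ x).1, 0) + T (0, (Θ x).2) := by
      rw [← map_add, Prod.mk_add_mk, add_zero, zero_add]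
    have hCf : C (f.rangeRestrict x) = f.rangeRestrict (f x) := Subtype.ext (hC _)
    ext <;> simp [S, LinearEquiv.conjAlgEquiv_apply, hsplit, hTC, hT0, hΘ, hCf]
  refine ⟨S, f - S, hS, LinearMap.ext fun x ↦ Θ.injective ?_, (add_sub_cancel S f).symm⟩
  rw [sq, Module.End.mul_apply, hN, hN]
  simp only [Prod.mk_zero_zero, map_zero, Prod.fst_zero, neg_zero, LinearMap.zero_apply]

theorem finrank_le_two_mul_finrank_range_of_injective_sub {N : Module.End F V}
    (hinj : Function.Injective (f - N)) (hN : N ^ 2 = 0) :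
    Module.finrank F V ≤ 2 * Module.finrank F (LinearMap.range f) := by
  have hdisj : LinearMap.ker f ⊓ LinearMap.ker N = ⊥ := by
    refine (Submodule.eq_bot_iff _).2 fun x ⟨hf, hN⟩ ↦ (map_eq_zero_iff _ hinj).1 ?_
    rw [LinearMap.sub_apply, LinearMap.mem_ker.1 hf, LinearMap.mem_ker.1 hN, sub_zero]
  have hle : LinearMap.range N ≤ LinearMap.ker N := by
    rintro _ ⟨x, rfl⟩
    rw [LinearMap.mem_ker, ← Module.End.mul_apply, ← sq, hN, LinearMap.zero_apply]
  have hsup := Submodule.finrank_add_finrank_le_of_disjoint (disjoint_iff.2 hdisj)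
  have hmono := Submodule.finrank_mono hle
  have hrankN := LinearMap.finrank_range_add_finrank_ker N
  have hrankf := LinearMap.finrank_range_add_finrank_ker f
  omega

theorem HasTorsionTraces.exists_isOfFinOrder_add_sq_eq_zero_iff (hF : HasTorsionTraces F)
    {m k : ℕ} (hkm : k < m) (hf : f ^ m = f ^ k) :
    (∃ T N : Module.End F V, IsOfFinOrder T ∧ N ^ 2 = 0 ∧ f = T + N) ↔
      Module.finrank F V ≤ 2 * Module.finrank F (LinearMap.range f) := by
  refine ⟨?_, fun h ↦ ?_⟩
  · rintro ⟨T, N, hT, hN, rfl⟩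
    refine finrank_le_two_mul_finrank_range_of_injective_sub ?_ hN
    simpa using ((Module.End.isUnit_iff T).1 hT.isUnit).1
  · let C : Module.End F (LinearMap.range f) := f.restrict fun x _ ↦ LinearMap.mem_range_self f x
    have hCf : f ∘ₗ Submodule.subtype _ = Submodule.subtype _ ∘ₗ C := rfl
    have hC : C ^ m = C ^ k := by
      rw [← LinearMap.cancel_left (Submodule.injective_subtype _),
        ← Module.End.commute_pow_left_of_commute hCf, hf,
        Module.End.commute_pow_left_of_commute hCf]
    have hker : Module.finrank F (LinearMap.ker C) ≤ Module.finrank F (LinearMap.ker f) := by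
      rw [← Submodule.finrank_map_subtype_eq]
      refine Submodule.finrank_mono ?_
      rintro _ ⟨y, hy, rfl⟩
      exact congrArg Subtype.val hy
    have hrank := LinearMap.finrank_range_add_finrank_ker f
    exact (hF.hasTorsionBordering hkm hC hker (by omega)).exists_add_sq_eq_zero fun _ ↦ rfl

end SquareZero

theorem periodic_eq_torsion_add_squareZero_iff_general {F ι : Type*} [Field F] [Fintype ι]
    [DecidableEq ι] (hF : HasTorsionTraces F) (A : Matrix ι ι F)
    (hA : ∃ m k : ℕ, k < m ∧ A ^ m = A ^ k) :
    (∃ T N : Matrix ι ι F, IsUnit T ∧ (∃ s : ℕ, 1 ≤ s ∧ T ^ s = 1) ∧ N ^ 2 = 0 ∧ A = T + N) ↔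
      Fintype.card ι ≤ 2 * A.rank := by
  obtain ⟨m, k, hkm, hmk⟩ := hA
  let e : Matrix ι ι F ≃ₐ[F] Module.End F (ι → F) := Matrix.toLinAlgEquiv'
  have hiff := hF.exists_isOfFinOrder_add_sq_eq_zero_iff (f := e A) hkm
    (by rw [← map_pow, hmk, map_pow])
  have hrank : Module.finrank F (LinearMap.range (e A)) = A.rank := rfl
  rw [Module.finrank_fintype_fun_eq_card, hrank] at hiff
  rw [← hiff, e.surjective.exists₂]
  refine exists₂_congr fun T N ↦ ?_
  have hT : IsOfFinOrder (e T) ↔ IsUnit T ∧ ∃ s, 1 ≤ s ∧ T ^ s = 1 :=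
    (Function.Injective.isOfFinOrder_iff (f := e.toMonoidHom) e.injective).trans
      ⟨fun h ↦ ⟨h.isUnit, isOfFinOrder_iff_pow_eq_one.1 h⟩,
        fun h ↦ isOfFinOrder_iff_pow_eq_one.2 h.2⟩
  rw [hT, ← map_pow, map_eq_zero_iff e e.injective, ← map_add, e.injective.eq_iff, and_assoc]

/-- Over `ℚ`, an algebraically closed field of characteristic zero, or a
field of prime characteristic, a periodic matrix is the sum of a torsion
matrix and a square-zero matrix if and only if its rank is at least `n/2`. -/
theorem periodic_eq_torsion_add_squareZero_iff
    {F : Type*} [Field F]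
    (hF : Nonempty (F ≃+* ℚ) ∨ (IsAlgClosed F ∧ CharZero F) ∨
      (∃ p : ℕ, p.Prime ∧ CharP F p))
    {n : ℕ} (A : Matrix (Fin n) (Fin n) F)
    (hA : ∃ m k : ℕ, 1 ≤ k ∧ k < m ∧ A ^ m = A ^ k) :
    (∃ T N : Matrix (Fin n) (Fin n) F,
      IsUnit T ∧ (∃ s : ℕ, 1 ≤ s ∧ T ^ s = 1) ∧ N ^ 2 = 0 ∧
      A = T + N) ↔ n ≤ 2 * A.rank := by
  obtain ⟨m, k, _, hkm, hmk⟩ := hA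
  simpa using
    periodic_eq_torsion_add_squareZero_iff_general (hasTorsionTraces hF) A ⟨m, k, hkm, hmk⟩
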